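/- arXiv:2010.13249 — 4 statements merged into one kernel-verified Lean document; each statement's English description precedes it below -/
import Mathlib

section
/- Every finite set S ⊆ ℕ^d with |S| ≤ ∑_{i=1}^{d} i^i is numerically coverable. -/
/-- A finite set `S ⊆ ℕ^d` is coverable if it can be partitioned into parts
`P 0, …, P (d-1)` such that any two distinct points in part `P i` differ in some
coordinate other than `i` (i.e. each part has at most one point on every line
parallel to the `i`-th coordinate axis). -/
def Coverable {d : ℕ} (S : Finset (Fin d → ℕ)) : Prop :=
  ∃ P : Fin d → Finset (Fin d → ℕ),
    (∀ i, P i ⊆ S) ∧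
    (∀ x ∈ S, ∃! i, x ∈ P i) ∧
    (∀ i, ∀ x ∈ P i, ∀ y ∈ P i, x ≠ y → ∃ j, j ≠ i ∧ x j ≠ y j)

/-- The projection of `S ⊆ ℕ^d` onto the coordinate hyperplane obtained by deleting the
`i`-th coordinate (realized by setting the `i`-th coordinate to `0`). -/
def coordProj {d : ℕ} (i : Fin d) (S : Finset (Fin d → ℕ)) : Finset (Fin d → ℕ) :=
  S.image (fun x => Function.update x i 0)

/-- A finite set `S ⊆ ℕ^d` is numerically coverable if
`∑_{i=1}^d |π_i(S)| ≥ |S|`. -/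
def NumericallyCoverable {d : ℕ} (S : Finset (Fin d → ℕ)) : Prop :=
  S.card ≤ ∑ i : Fin d, (coordProj i S).card

/-- Size of the `m`-th quasi-cube in dimension `d`. -/
def qc : ℕ → ℕ → ℕ
  | 0, _ => 1
  | d + 1, m => (m / (d + 1) + 1) * qc d (m - m / (d + 1))

/-- Size of the face added to the `m`-th quasi-cube in dimension `d+1`. -/
def qface (d m : ℕ) : ℕ := qc d (m - m / (d + 1))

theorem qc_succ (d m : ℕ) : qc (d + 1) m = (m / (d + 1) + 1) * qface d m := rfl

/-- Division step: either the quotient increases, or it stays and there is a remainder. -/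
theorem div_step (d m : ℕ) :
    ((m + 1) / (d + 1) = m / (d + 1) + 1 ∧ (m + 1) - (m + 1) / (d + 1) = m - m / (d + 1)) ∨
    ((m + 1) / (d + 1) = m / (d + 1) ∧
      (m + 1) - (m + 1) / (d + 1) = (m - m / (d + 1)) + 1 ∧ 1 ≤ d ∧
      (m - m / (d + 1)) / d = m / (d + 1)) := by
  have h1 : m / (d + 1) ≤ m := Nat.div_le_self _ _
  by_cases h : (d + 1) ∣ (m + 1)
  · left
    have := Nat.succ_div_of_dvd h
    constructor
    · exact this
    · rw [this]; omega
  · right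
    have := Nat.succ_div_of_not_dvd h
    have hd : 1 ≤ d := by
      rcases Nat.eq_zero_or_pos d with rfl | h'
      · simp at h
      · exact h'
    refine ⟨this, by rw [this]; omega, hd, ?_⟩
    have hm := Nat.div_add_mod m (d + 1)
    have hlt := Nat.mod_lt m (Nat.succ_pos d)
    have hne : m % (d + 1) ≠ d := by
      intro h2
      apply h
      refine ⟨m / (d + 1) + 1, ?_⟩
      rw [h2] at hm
      rw [mul_add]
      omega
    set a := m / (d + 1) with ha
    set j := m % (d + 1) with hj
    have e : m - a = d * a + j := by
      have : (d + 1) * a = d * a + a := by ring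
      omega
    rw [e, Nat.mul_add_div hd, Nat.div_eq_of_lt (by simp only [Nat.succ_eq_add_one] at hlt; omega)]
    simp

theorem qc_succ_succ (d : ℕ) : ∀ m, qc (d + 1) (m + 1) = (m / (d + 1) + 2) * qface d m := by
  induction d with
  | zero => intro m; simp [qc, qface]
  | succ d ih =>
    intro m
    rw [qc_succ, qface, qface]
    rcases div_step (d + 1) m with ⟨h1, h2⟩ | ⟨h1, h2, _, h3⟩
    · rw [h2, h1]
    · rw [h2, h1, ih, h3, qc_succ d (m - _), h3]
      ring

theorem qc_add (d m : ℕ) : qc (d + 1) (m + 1) = qc (d + 1) m + qface d m := by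
  rw [qc_succ_succ, qc_succ]; ring

theorem qc_pos (d : ℕ) : ∀ m, 1 ≤ qc d m := by
  induction d with
  | zero => intro m; simp [qc]
  | succ d ih =>
    intro m
    rw [qc_succ]
    exact Nat.mul_pos (Nat.succ_pos _) (ih _)

theorem qface_pos (d m : ℕ) : 1 ≤ qface d m := qc_pos _ _

theorem qc_mono (d : ℕ) : Monotone (qc d) := by
  cases d with
  | zero => intro a b _; simp [qc]
  | succ d => exact monotone_nat_of_le_succ (fun m => by rw [qc_add]; omega)

theorem qc_zero (d : ℕ) : qc d 0 = 1 := by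
  induction d with
  | zero => rfl
  | succ d ih => rw [qc_succ, qface]; simp [ih]

theorem qface_mono (d : ℕ) : Monotone (qface d) := by
  refine monotone_nat_of_le_succ (fun m => ?_)
  apply qc_mono
  rcases div_step d m with ⟨h1, h2⟩ | ⟨h1, h2, _, h3⟩ <;> omega

theorem lt_qc (d m : ℕ) : m < qc (d + 1) m := by
  induction m with
  | zero => exact qc_pos _ _
  | succ m ih => rw [qc_add]; have := qface_pos d m; omega

theorem qc_le_pow (d : ℕ) : ∀ a, qc d (d * a) = (a + 1) ^ d := by
  induction d with
  | zero => intro a; simp [qc]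
  | succ d ih =>
    intro a
    have h1 : (d + 1) * a / (d + 1) = a := Nat.mul_div_cancel_left a (Nat.succ_pos d)
    have h2 : (d + 1) * a - a = d * a := by
      have : (d + 1) * a = d * a + a := by ring
      omega
    rw [qc_succ, qface, h1, h2, ih]
    ring

theorem qface_le_pow (d m : ℕ) : qface d m ≤ (m / (d + 1) + 2) ^ d := by
  rw [← qc_le_pow d (m / (d + 1) + 1)]
  apply qc_mono
  have hm := Nat.div_add_mod m (d + 1)
  have hlt := Nat.mod_lt m (Nat.succ_pos d)
  simp only [Nat.succ_eq_add_one] at hlt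
  have : (d + 1) * (m / (d + 1)) = d * (m / (d + 1)) + m / (d + 1) := by ring
  rw [mul_add]
  omega

theorem pow_le_qc (d m : ℕ) : (m / (d + 1) + 1) ^ (d + 1) ≤ qc (d + 1) m := by
  rw [← qc_le_pow]
  exact qc_mono _ (Nat.mul_div_le m (d + 1))

/-- index of the last quasi-cube of size at most `n`. -/
def qidx (d n : ℕ) : ℕ := Nat.findGreatest (fun m => qc (d + 1) m ≤ n) n

theorem qidx_eq {d n m : ℕ} (h1 : qc (d + 1) m ≤ n) (h2 : n < qc (d + 1) (m + 1)) :
    qidx d n = m := by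
  apply le_antisymm
  · by_contra hlt
    have h3 : qc (d + 1) (qidx d n) ≤ n := by
      have hm : m ≤ n := by have := lt_qc d m; omega
      exact Nat.findGreatest_spec (P := fun m => qc (d + 1) m ≤ n) hm h1
    have := qc_mono (d + 1) (show m + 1 ≤ qidx d n by omega)
    omega
  · exact Nat.le_findGreatest (P := fun m => qc (d + 1) m ≤ n)
      (by have := lt_qc d m; omega) h1

/-- number of backward edges of the `n`-th point in the cube order. -/
def bw : ℕ → ℕ → ℕ
  | 0, _ => 0
  | d + 1, n => if n = 0 then 0 else 1 + bw d (n - qc (d + 1) (qidx d n))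

/-- number of edges in the initial segment of size `n`. -/
def del (d n : ℕ) : ℕ := ∑ i ∈ Finset.range n, bw d i

theorem del_zero (d : ℕ) : del d 0 = 0 := by simp [del]

theorem del_one (d : ℕ) : del d 1 = 0 := by
  cases d <;> simp [del, bw]

theorem del_zero_left (n : ℕ) : del 0 n = 0 := by simp [del, bw]

theorem del_mono (d : ℕ) : Monotone (del d) :=
  monotone_nat_of_le_succ (fun n => by rw [del, del, Finset.sum_range_succ]; omega)

theorem del_rec (d m r : ℕ) (hr : r ≤ qface d m) :
    del (d + 1) (qc (d + 1) m + r) = del (d + 1) (qc (d + 1) m) + r + del d r := by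
  induction r with
  | zero => simp [del_zero]
  | succ r ih =>
    have ih := ih (by omega)
    have e : bw (d + 1) (qc (d + 1) m + r) = 1 + bw d r := by
      rw [bw, if_neg (by have := qc_pos (d + 1) m; omega),
        qidx_eq (m := m) (by omega) (by rw [qc_add]; omega)]
      simp
    have e1 : del (d + 1) (qc (d + 1) m + (r + 1))
        = del (d + 1) (qc (d + 1) m + r) + bw (d + 1) (qc (d + 1) m + r) := by
      rw [del, ← add_assoc, Finset.sum_range_succ, ← del]
    have e2 : del d (r + 1) = del d r + bw d r := by
      rw [del, Finset.sum_range_succ, ← del]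
    rw [e1, e2, e, ih]; ring

theorem exists_rep (d n : ℕ) (hn : 2 ≤ n) :
    ∃ m r, n = qc (d + 1) m + r ∧ 0 < r ∧ r ≤ qface d m := by
  have hex : ∃ m, n ≤ qc (d + 1) m := ⟨n, (lt_qc d n).le⟩
  classical
  have h1 := Nat.find_spec hex
  have h2 : Nat.find hex ≠ 0 := by
    intro h; rw [h, qc_zero] at h1; omega
  obtain ⟨m, hm⟩ := Nat.exists_eq_succ_of_ne_zero h2
  have h3 := Nat.find_min hex (m := m) (by omega)
  rw [hm, Nat.succ_eq_add_one, qc_add] at h1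
  exact ⟨m, n - qc (d + 1) m, by omega, by omega, by omega⟩

/-- Last-segment property. -/
def PJ (d : ℕ) : Prop := ∀ m x y, y ≤ x → x ≤ qc d m →
  del d x + del d (qc d m - y) ≤ del d (qc d m) + del d (x - y)

/-- Superadditivity. -/
def PS (d : ℕ) : Prop := ∀ x y, del d x + del d y ≤ del d (x + y)

theorem lemK {d : ℕ} (hJ : PJ d) (hS : PS d) (m : ℕ) : ∀ y x, y ≤ x → x ≤ qc (d + 1) (m + 1) →
    y ≤ qface d m →
    del (d + 1) x + del d (qface d m - y) ≤ y + del d (qface d m) + del (d + 1) (x - y) := by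
  intro y
  induction y using Nat.strong_induction_on with
  | _ y ih =>
  intro x hyx hx hy
  rcases Nat.lt_or_ge x 2 with h | h
  · have : del (d + 1) x = 0 := by
      interval_cases x
      · exact del_zero _
      · exact del_one _
    have := del_mono d (show qface d m - y ≤ qface d m by omega)
    omega
  obtain ⟨i, r, hxe, hr0, hr⟩ := exists_rep d x h
  have him : i ≤ m := by
    by_contra hc
    have := qc_mono (d + 1) (show m + 1 ≤ i by omega)
    omega
  have hf := qface_mono d him
  by_cases hyr : y ≤ r
  · have e1 := del_rec d i r hr
    have e2 := del_rec d i (r - y) (by omega)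
    have := hJ (m - m / (d + 1)) r y hyr (by change r ≤ qface d m; omega)
    change del d r + del d (qface d m - y) ≤ del d (qface d m) + _ at this
    have e3 : x - y = qc (d + 1) i + (r - y) := by omega
    rw [e3, hxe, e1, e2]; omega
  · have e1 := del_rec d i r hr
    have h1 := ih (y - r) (by omega) (qc (d + 1) i) (by omega) (by omega) (by omega)
    have h2 := hS r (qface d m - y)
    have e3 : x - y = qc (d + 1) i - (y - r) := by omega
    have e4 : qface d m - (y - r) = r + (qface d m - y) := by omega
    rw [e4] at h1
    rw [e3, hxe, e1]; omega

theorem stepJ {d : ℕ} (hJ : PJ d) (hS : PS d) : PJ (d + 1) := by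
  intro m
  induction m with
  | zero =>
    intro x y hyx hx
    rw [qc_zero] at *
    have : del (d + 1) x = 0 := by
      interval_cases x
      · exact del_zero _
      · exact del_one _
    have := del_mono (d + 1) (show 1 - y ≤ 1 by omega)
    omega
  | succ m ih =>
    intro x y hyx hx
    have key : ∀ x y, y ≤ x → x ≤ qc (d + 1) (m + 1) → y ≤ qface d m →
        del (d + 1) x + del (d + 1) (qc (d + 1) (m + 1) - y) ≤
          del (d + 1) (qc (d + 1) (m + 1)) + del (d + 1) (x - y) := by
      intro x y hyx hx hy
      have := lemK hJ hS m y x hyx hx hy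
      have e1 := del_rec d m (qface d m) le_rfl
      have e2 := del_rec d m (qface d m - y) (by omega)
      have e3 : qc (d + 1) (m + 1) - y = qc (d + 1) m + (qface d m - y) := by
        rw [qc_add]; omega
      rw [e3, qc_add, e1, e2]; omega
    by_cases hy : y ≤ qface d m
    · exact key x y hyx hx hy
    · have h1 := key x (qface d m) (by omega) hx le_rfl
      have hq := qc_add d m
      have h2 := ih (x - qface d m) (y - qface d m) (by omega) (by omega)
      have e1 : qc (d + 1) (m + 1) - qface d m = qc (d + 1) m := by omega
      have e2 : qc (d + 1) (m + 1) - y = qc (d + 1) m - (y - qface d m) := by omega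
      have e3 : x - qface d m - (y - qface d m) = x - y := by omega
      rw [e1] at h1
      rw [e3] at h2
      rw [e2]; omega

theorem lemI {d : ℕ} (hJ : PJ d) (hS : PS d) (m r t : ℕ) (hr : r ≤ qface d m)
    (ht : t ≤ r ∨ ∃ m', m = m' + 1 ∧ t ≤ qface d m') :
    del (d + 1) (qc (d + 1) m + r - t) + t + del d t ≤ del (d + 1) (qc (d + 1) m + r) := by
  by_cases htr : t ≤ r
  · have e1 := del_rec d m r hr
    have e2 := del_rec d m (r - t) (by omega)
    have := hS (r - t) t
    rw [Nat.sub_add_cancel htr] at this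
    rw [Nat.add_sub_assoc htr, e1, e2]; omega
  · obtain ⟨m', rfl, ht'⟩ := ht.resolve_left htr
    have e1 := del_rec d (m' + 1) r hr
    have e2 := del_rec d m' (qface d m') le_rfl
    have e3 := del_rec d m' (qface d m' - (t - r)) (by omega)
    have hq := qc_add d m'
    have := hJ (m' - m' / (d + 1)) t (t - r) (by omega) ht'
    change del d t + del d (qface d m' - (t - r)) ≤ del d (qface d m') + _ at this
    rw [show t - (t - r) = r by omega] at this
    have e4 : qc (d + 1) (m' + 1) + r - t = qc (d + 1) m' + (qface d m' - (t - r)) := by omega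
    rw [e4, e1, e3, hq, e2]; omega

theorem stepS {d : ℕ} (hJ : PJ d) (hS : PS d) : PS (d + 1) := by
  intro x y
  induction y using Nat.strong_induction_on with
  | _ y ih =>
  rcases Nat.lt_or_ge y 2 with h | h
  · have : del (d + 1) y = 0 := by
      interval_cases y
      · exact del_zero _
      · exact del_one _
    have := del_mono (d + 1) (show x ≤ x + y by omega)
    omega
  obtain ⟨i, r, hye, hr0, hr⟩ := exists_rep d y h
  obtain ⟨m, r', hxe, hr0', hr'⟩ := exists_rep d (x + y) (by omega)
  have h1 := ih (qc (d + 1) i) (by omega)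
  have e1 := del_rec d i r hr
  have him : i ≤ m := by
    by_contra hc
    have := qc_mono (d + 1) (show m + 1 ≤ i by omega)
    have := qc_add d m
    omega
  have h2 := lemI hJ hS m r' r hr' (by
    rcases Nat.eq_or_lt_of_le him with h | h
    · subst h; left; omega
    · right
      exact ⟨m - 1, by omega, hr.trans (qface_mono d (by omega))⟩)
  rw [← hxe, show x + y - r = x + qc (d + 1) i by omega] at h2
  rw [← hye] at e1
  omega

theorem PJS (d : ℕ) : PJ d ∧ PS d := by
  induction d with
  | zero =>
    constructor
    · intro m x y _ _; simp [del_zero_left]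
    · intro x y; simp [del_zero_left]
  | succ d ih => exact ⟨stepJ ih.1 ih.2, stepS ih.1 ih.2⟩

theorem idx_lt_of_lt_pow {d m k : ℕ} (h : qc (d + 1) m < k ^ (d + 1)) : m / (d + 1) + 2 ≤ k := by
  have := lt_of_le_of_lt (pow_le_qc d m) h
  have := lt_of_pow_lt_pow_left₀ _ (Nat.zero_le _) this
  omega

theorem key_ineq (d : ℕ) : ∀ N t k, 2 ≤ k → k * t ≤ N → N ≤ k ^ (d + 1) →
    del (d + 1) (N - t) + t + del d t ≤ del (d + 1) N := by
  induction d with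
  | zero =>
    intro N t k hk h1 h2
    have : t ≤ 1 := by
      have : k * t ≤ k * 1 := by simpa using h1.trans h2
      exact Nat.le_of_mul_le_mul_left this (by omega)
    interval_cases t
    · simp [del_zero]
    · obtain ⟨m, r, hN, hr0, hr⟩ := exists_rep 0 N (by omega)
      rw [hN]
      exact lemI (PJS 0).1 (PJS 0).2 m r 1 hr (Or.inl hr0)
  | succ d ih =>
    intro N t k hk h1 h2
    rcases Nat.eq_zero_or_pos t with rfl | htp
    · simp [del_zero]
    have hN2 : 2 ≤ N := by nlinarith
    obtain ⟨m, r, hN, hr0, hr⟩ := exists_rep (d + 1) N hN2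
    have hIk := idx_lt_of_lt_pow (show qc (d + 1 + 1) m < k ^ (d + 1 + 1) by omega)
    have h1' : (m / (d + 1 + 1) + 2) * t ≤ N := (Nat.mul_le_mul_right t hIk).trans h1
    obtain ⟨hJ, hS⟩ := PJS (d + 1)
    by_cases htr : t ≤ r
    · rw [hN]; exact lemI hJ hS m r t hr (Or.inl htr)
    have htm : t ≤ qface (d + 1) m := by
      have h3 := qc_add (d + 1) m
      rw [qc_succ_succ] at h3
      have : (m / (d + 1 + 1) + 2) * t ≤ (m / (d + 1 + 1) + 2) * qface (d + 1) m := by omega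
      exact Nat.le_of_mul_le_mul_left this (Nat.succ_pos _)
    rcases Nat.eq_zero_or_pos m with rfl | hm
    · exfalso
      have : qface (d + 1) 0 = 1 := by simp [qface, qc_zero]
      omega
    obtain ⟨m', rfl⟩ : ∃ m', m = m' + 1 := ⟨m - 1, by omega⟩
    by_cases htf : t ≤ qface (d + 1) m'
    · rw [hN]; exact lemI hJ hS _ r t hr (Or.inr ⟨m', rfl, htf⟩)
    rcases div_step (d + 1) m' with ⟨g1, g2⟩ | ⟨g1, g2, _, g3⟩
    · exfalso
      have : qface (d + 1) (m' + 1) = qface (d + 1) m' := by rw [qface, g2, ← qface]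
      omega
    · obtain ⟨s, hs⟩ : ∃ s, t = qface (d + 1) m' + s := ⟨t - qface (d + 1) m', by omega⟩
      have hq := qc_add (d + 1) m'
      have hq2 := qc_succ_succ (d + 1) m'
      rw [g1] at h1'
      have hs1 : (m' / (d + 1 + 1) + 2) * s ≤ r := by
        rw [hs, mul_add] at h1'; omega
      have hface : qface (d + 1) (m' + 1) =
          qface (d + 1) m' + qface d (m' - m' / (d + 1 + 1)) := by
        rw [qface, g2, qc_add]; rfl
      have hrp := qface_le_pow (d + 1) (m' + 1)
      rw [g1] at hrp
      have hI := ih r s (m' / (d + 1 + 1) + 2) (Nat.le_add_left _ _) hs1 (hr.trans hrp)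
      have hsr : s ≤ r := by nlinarith
      have e1 := del_rec (d + 1) (m' + 1) r hr
      have e2 := del_rec (d + 1) m' (qface (d + 1) m') le_rfl
      have e3 := del_rec (d + 1) m' (r - s) (by omega)
      have e4 := del_rec d (m' - m' / (d + 1 + 1)) s (by omega)
      change del (d + 1) (qface (d + 1) m' + s) = del (d + 1) (qface (d + 1) m') + _ + _ at e4
      have e5 : N - t = qc (d + 1 + 1) m' + (r - s) := by omega
      rw [e5, hN, e1, e3, hs, e4, hq, e2]
      omega

theorem del_qc_le (d : ℕ) : ∀ m, del (d + 1) (qc (d + 1) m) ≤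
    m / (d + 1) * qface d m + (m / (d + 1) + 1) * del d (qface d m) := by
  induction d with
  | zero =>
    intro m
    induction m with
    | zero => simp [qc_zero, del_one]
    | succ m ih =>
      have := del_rec 0 m (qface 0 m) le_rfl
      have h1 : ∀ m, qface 0 m = 1 := by intro m; simp [qface, qc]
      rw [qc_add, this]
      simp only [del_zero_left, h1] at *
      simp at *
      omega
  | succ d ihd =>
    intro m
    induction m with
    | zero => simp [qc_zero, del_one]
    | succ m ih =>
      have e1 := del_rec (d + 1) m (qface (d + 1) m) le_rfl
      rw [qc_add, e1]
      rcases div_step (d + 1) m with ⟨g1, g2⟩ | ⟨g1, g2, _, g3⟩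
      · have : qface (d + 1) (m + 1) = qface (d + 1) m := by rw [qface, g2, ← qface]
        rw [this, g1]
        nlinarith
      · have hface : qface (d + 1) (m + 1) =
            qface (d + 1) m + qface d (m - m / (d + 1 + 1)) := by
          rw [qface, g2, qc_add]; rfl
        have hM := ihd (m - m / (d + 1 + 1))
        have hφ := qc_succ d (m - m / (d + 1 + 1))
        have e2 := del_rec d (m - m / (d + 1 + 1)) _ le_rfl
        change del (d + 1) (qface (d + 1) m + _) = del (d + 1) (qface (d + 1) m) + _ + _ at e2
        change qface (d + 1) m = _ at hφ
        change del (d + 1) (qface (d + 1) m) ≤ _ at hM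
        rw [g1, hface, e2]
        rw [g3] at hM hφ
        generalize qface d (m - m / (d + 1 + 1)) = ψ at *
        generalize m / (d + 1 + 1) = a at *
        generalize del (d + 1) (qface (d + 1) m) = D at *
        rw [hφ] at ih ⊢
        nlinarith

theorem lw (d : ℕ) : ∀ k n, 1 ≤ k → n ≤ k ^ d → k * del d n + d * n ≤ k * (d * n) := by
  induction d with
  | zero => intro k n _ _; simp [del_zero_left]
  | succ d ih =>
    intro k n hk hn
    rcases Nat.lt_or_ge n 2 with h | h
    · have : del (d + 1) n = 0 := by
        interval_cases n
        · exact del_zero _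
        · exact del_one _
      rw [this]; nlinarith [Nat.zero_le ((d + 1) * n)]
    obtain ⟨m, r, rfl, hr0, hr⟩ := exists_rep d n h
    have hIk := idx_lt_of_lt_pow (show qc (d + 1) m < k ^ (d + 1) by omega)
    have hf : qface d m ≤ k ^ d := (qface_le_pow d m).trans (Nat.pow_le_pow_left hIk d)
    have i1 := ih k r hk (hr.trans hf)
    have i2 := ih k _ hk hf
    have hM := del_qc_le d m
    have e1 := del_rec d m r hr
    rw [e1]
    have hq := qc_succ d m
    generalize qface d m = φ at *
    generalize m / (d + 1) = a at *
    have main : k * del (d + 1) (qc (d + 1) m) + (d + 1) * qc (d + 1) m + r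
        ≤ k * ((d + 1) * qc (d + 1) m) := by
      have h1 : k * del (d + 1) (qc (d + 1) m) ≤ k * (a * φ) + (a + 1) * (k * del d φ) := by
        calc _ ≤ k * (a * φ + (a + 1) * del d φ) := Nat.mul_le_mul_left k hM
          _ = _ := by ring
      have h2 := Nat.mul_le_mul_left (a + 1) i2
      have h3 := Nat.mul_le_mul_right φ hIk
      have h4 := congrArg (fun z => k * ((d + 1) * z)) hq
      have h5 := congrArg (fun z => (d + 1) * z) hq
      rw [h4, h5]
      nlinarith
    nlinarith

theorem sum_le_pow (d : ℕ) : ∑ i ∈ Finset.Icc 1 d, i ^ i ≤ (d + 1) ^ d := by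
  induction d with
  | zero => simp
  | succ d ih =>
    rw [Finset.sum_Icc_succ_top (by omega)]
    have h : (d + 1) ^ d ≤ (d + 1 + 1) ^ d := Nat.pow_le_pow_left (by omega) d
    calc _ ≤ (d + 1) ^ d + (d + 1) ^ (d + 1) := by omega
      _ = (d + 1 + 1) * (d + 1) ^ d := by ring
      _ ≤ (d + 1 + 1) * (d + 1 + 1) ^ d := Nat.mul_le_mul_left _ h
      _ = _ := by ring

theorem del_le (d : ℕ) : ∀ n, n ≤ ∑ i ∈ Finset.Icc 1 d, i ^ i → del d n + n ≤ d * n := by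
  induction d with
  | zero => intro n hn; simp at hn; subst hn; simp [del_zero]
  | succ d ih =>
    intro n hn
    by_cases h : n ≤ (d + 1) ^ (d + 1)
    · have := lw (d + 1) (d + 1) n (by omega) h
      have : (d + 1) * (del (d + 1) n + n) ≤ (d + 1) * ((d + 1) * n) := by
        rw [mul_add]; exact this
      exact Nat.le_of_mul_le_mul_left this (by omega)
    · rw [Finset.sum_Icc_succ_top (by omega)] at hn
      obtain ⟨r, rfl⟩ : ∃ r, n = (d + 1) ^ (d + 1) + r := ⟨n - (d + 1) ^ (d + 1), by omega⟩
      have hr := ih r (by omega)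
      have h0 := lw (d + 1) (d + 1) ((d + 1) ^ (d + 1)) (by omega) le_rfl
      have h0' : del (d + 1) ((d + 1) ^ (d + 1)) + (d + 1) ^ (d + 1) ≤
          (d + 1) * (d + 1) ^ (d + 1) := by
        have : (d + 1) * (del (d + 1) ((d + 1) ^ (d + 1)) + (d + 1) ^ (d + 1)) ≤
            (d + 1) * ((d + 1) * (d + 1) ^ (d + 1)) := by
          rw [mul_add]; exact h0
        exact Nat.le_of_mul_le_mul_left this (by omega)
      have hq := qc_le_pow (d + 1) d
      have hf : qface d ((d + 1) * d) = (d + 1) ^ d := by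
        rw [qface, Nat.mul_div_cancel_left d (Nat.succ_pos d), ← qc_le_pow]
        congr 1
        have : (d + 1) * d = d * d + d := by ring
        omega
      have hs := sum_le_pow d
      have e := del_rec d ((d + 1) * d) r (by omega)
      rw [hq] at e
      rw [e]
      nlinarith

/-- Edge-isoperimetric inequality. -/
theorem iso {D : ℕ} (d : ℕ) : ∀ (n : ℕ) (I : Finset (Fin D)) (S : Finset (Fin D → ℕ)),
    I.card = d → S.card = n →
    (∀ x ∈ S, ∀ y ∈ S, (∀ i ∈ I, x i = y i) → x = y) →
    d * n ≤ ∑ i ∈ I, (coordProj i S).card + del d n := by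
  induction d with
  | zero => intro n I S _ _ _; simp
  | succ d ihd =>
  intro n
  induction n using Nat.strong_induction_on with
  | _ n ihn =>
  intro I S hI hSn hinj
  rcases Nat.lt_or_ge n 2 with hlt | hn2
  · rcases Nat.eq_zero_or_pos n with rfl | hpos
    · simp
    have hn1 : n = 1 := by omega
    have hne : S.Nonempty := Finset.card_pos.mp (by omega)
    have : ∑ i ∈ I, 1 ≤ ∑ i ∈ I, (coordProj i S).card :=
      Finset.sum_le_sum (fun i _ => Finset.card_pos.mpr (hne.image _))
    simp [hI] at this
    subst hn1
    omega
  -- direction with the largest number of slices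
  have hIne : I.Nonempty := Finset.card_pos.mp (by omega)
  obtain ⟨i, hiI, hmax⟩ := Finset.exists_max_image I (fun i => (S.image (fun x => x i)).card) hIne
  set V := S.image (fun x => x i) with hV
  have hprod : n ≤ V.card ^ (d + 1) := by
    have h1 : S.card ≤ (I.pi (fun j => S.image (fun x => x j))).card := by
      apply Finset.card_le_card_of_injOn (fun x => fun j _ => x j)
      · intro x hx
        rw [Finset.mem_coe, Finset.mem_pi]
        intro j _
        exact Finset.mem_image_of_mem _ hx
      · intro x hx y hy hxy
        refine hinj x hx y hy (fun j hj => ?_)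
        exact congrFun (congrFun hxy j) hj
    rw [Finset.card_pi] at h1
    have h2 := Finset.prod_le_pow_card I (fun j => (S.image (fun x => x j)).card) V.card
      (fun j hj => hmax j hj)
    rw [hI] at h2
    omega
  have hk2 : 2 ≤ V.card := by
    by_contra hc
    have : V.card ^ (d + 1) ≤ 1 ^ (d + 1) := Nat.pow_le_pow_left (by omega) _
    rw [one_pow] at this
    omega
  have hVne : V.Nonempty := Finset.card_pos.mp (by omega)
  obtain ⟨v, hvV, hvmin⟩ := Finset.exists_min_image V
    (fun v => (S.filter (fun x => x i = v)).card) hVne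
  set T := S.filter (fun x => x i = v) with hT
  set R := S.filter (fun x => ¬ x i = v) with hR
  have hcard : T.card + R.card = n := by
    rw [← hSn]; exact Finset.card_filter_add_card_filter_not _
  have hkt : V.card * T.card ≤ n := by
    rw [← hSn, Finset.card_eq_sum_card_image (fun x => x i) S]
    calc V.card * T.card = ∑ _v ∈ V, T.card := by simp
      _ ≤ _ := Finset.sum_le_sum hvmin
  have hTpos : 0 < T.card := by
    obtain ⟨x, hx, hxv⟩ := Finset.mem_image.mp hvV
    exact Finset.card_pos.mpr ⟨x, Finset.mem_filter.mpr ⟨hx, hxv⟩⟩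
  have hTS : T ⊆ S := Finset.filter_subset _ _
  have hRS : R ⊆ S := Finset.filter_subset _ _
  have hR1 := ihn R.card (by omega) I R hI rfl
    (fun x hx y hy h => hinj x (hRS hx) y (hRS hy) h)
  have hT1 := ihd T.card (I.erase i) T (by rw [Finset.card_erase_of_mem hiI, hI]; rfl) rfl
    (fun x hx y hy h => hinj x (hTS hx) y (hTS hy) (fun j hj => by
      by_cases hji : j = i
      · subst hji
        rw [(Finset.mem_filter.mp hx).2, (Finset.mem_filter.mp hy).2]
      · exact h j (Finset.mem_erase.mpr ⟨hji, hj⟩)))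
  have hk := key_ineq d n T.card V.card hk2 hkt hprod
  rw [show n - T.card = R.card by omega] at hk
  have hsum : ∑ j ∈ I, (coordProj j R).card + ∑ j ∈ I.erase i, (coordProj j T).card ≤
      ∑ j ∈ I, (coordProj j S).card := by
    rw [← Finset.add_sum_erase I _ hiI, ← Finset.add_sum_erase I (fun j => (coordProj j S).card) hiI,
      add_assoc, ← Finset.sum_add_distrib]
    apply Nat.add_le_add
    · exact Finset.card_le_card (Finset.image_subset_image hRS)
    · apply Finset.sum_le_sum
      intro j hj
      have hji : i ≠ j := (Finset.ne_of_mem_erase hj).symm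
      rw [← Finset.card_union_of_disjoint]
      · apply Finset.card_le_card
        exact Finset.union_subset (Finset.image_subset_image hRS) (Finset.image_subset_image hTS)
      · rw [Finset.disjoint_left]
        intro z hz1 hz2
        obtain ⟨x, hx, rfl⟩ := Finset.mem_image.mp hz1
        obtain ⟨y, hy, hxy⟩ := Finset.mem_image.mp hz2
        have := congrFun hxy i
        simp only [Function.update_of_ne hji] at this
        exact (Finset.mem_filter.mp hx).2 (this ▸ (Finset.mem_filter.mp hy).2)
  rw [← hcard] at hk ⊢
  nlinarith

/-- Every finite set `S ⊆ ℕ^d` with `|S| ≤ ∑_{i=1}^d i^i` is numerically coverable. -/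
theorem numerically_coverable_of_card_le_sum {d : ℕ}
    (S : Finset (Fin d → ℕ)) (hS : S.card ≤ ∑ i ∈ Finset.Icc 1 d, i ^ i) :
    NumericallyCoverable S := by
  have h1 := iso d S.card Finset.univ S (by simp) rfl
    (fun x _ y _ h => funext (fun i => h i (Finset.mem_univ i)))
  have h2 := del_le d S.card hS
  unfold NumericallyCoverable
  omega
end

section
/- The hat-guessing number of the complete bipartite graph K_{3,3} equals 3. -/
/-- A winning strategy for the hat-guessing game on `G` with `q` colors: each vertex `v`
guesses its color as a function of the colors of its neighbors, and for every coloring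
some vertex guesses correctly. -/
def HatGuessingWins {V : Type*} (G : SimpleGraph V) (q : ℕ) : Prop :=
  ∃ f : ∀ v : V, (G.neighborSet v → Fin q) → Fin q,
    ∀ c : V → Fin q, ∃ v : V, f v (fun u => c u.1) = c v

namespace HatK33

abbrev Y := Fin 3 → Fin 4

def enc (w : Fin 4 → Bool) : ℕ :=
  (w 0).toNat + 2 * (w 1).toNat + 4 * (w 2).toNat + 8 * (w 3).toNat

def masks (f : Fin 4 → Fin 4) : List ℕ :=
  [enc (fun s => decide (0 = f s)), enc (fun s => decide (1 = f s)),
   enc (fun s => decide (2 = f s)), enc (fun s => decide (3 = f s))]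

def cnt (K : ℕ) (L1 L2 L3 : List ℕ) : ℕ :=
  (L1.map fun a => (L2.map fun b => (L3.map fun c =>
    (K.testBit (a ||| b ||| c)).toNat).sum).sum).sum

/-- The fifteen set partitions of a 4-element set, as lists of bit masks. -/
def canon : List (List ℕ) :=
  [[15,0,0,0],[7,8,0,0],[11,4,0,0],[13,2,0,0],[14,1,0,0],[3,12,0,0],[5,10,0,0],[9,6,0,0],
   [3,4,8,0],[5,2,8,0],[9,2,4,0],[6,1,8,0],[10,1,4,0],[12,1,2,0],[1,2,4,8]]

/-- masks with at least three elements -/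
def K3 : ℕ := 59520
/-- masks with at least two of the first three elements -/
def K2 : ℕ := 59624

def majL (L : List ℕ) : Bool := L.any (fun a => K3.testBit a)

lemma exists_canon (f : Fin 4 → Fin 4) : ∃ L ∈ canon, (masks f).Perm L := by
  have h : ∀ a b c d : Fin 4, ∃ L ∈ canon, (masks ![a,b,c,d]).isPerm L = true := by
    decide +kernel
  obtain ⟨L, hL, hp⟩ := h (f 0) (f 1) (f 2) (f 3)
  refine ⟨L, hL, ?_⟩
  have : f = ![f 0, f 1, f 2, f 3] := by
    funext i; fin_cases i <;> rfl
  rw [this]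
  exact List.isPerm_iff.1 hp

lemma cnt_perm (K : ℕ) {L1 L2 L3 M1 M2 M3 : List ℕ} (h1 : L1.Perm M1) (h2 : L2.Perm M2)
    (h3 : L3.Perm M3) : cnt K L1 L2 L3 = cnt K M1 M2 M3 := by
  unfold cnt
  rw [(h1.map _).sum_eq]
  congr 2; funext a
  rw [(h2.map _).sum_eq]
  congr 2; funext b
  rw [(h3.map _).sum_eq]

lemma majL_perm {L M : List ℕ} (h : L.Perm M) : majL L = majL M := by
  unfold majL
  rw [Bool.eq_iff_iff, List.any_eq_true, List.any_eq_true]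
  simp only [h.mem_iff]

lemma check3 : (canon.all fun L1 => canon.all fun L2 => canon.all fun L3 =>
    let n := cnt K3 L1 L2 L3
    let t := (majL L1).toNat + (majL L2).toNat + (majL L3).toNat
    n.ble 38 && (n.ble 34 || t.beq 3) && (n.ble 33 || Nat.ble 2 t)) = true := by
  decide +kernel

lemma check2 : (canon.all fun L1 => canon.all fun L2 => canon.all fun L3 =>
    (cnt K2 L1 L2 L3).ble 44) = true := by
  decide +kernel

lemma enc_or (u v : Fin 4 → Bool) : enc u ||| enc v = enc (fun s => u s || v s) := by
  simp only [enc]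
  generalize u 0 = a, u 1 = b, u 2 = c, u 3 = d, v 0 = a', v 1 = b', v 2 = c', v 3 = d'
  revert a b c d a' b' c' d'
  decide +kernel

def Ag (y x : Y) : Prop := ∃ j, y j = x j

instance (y x : Y) : Decidable (Ag y x) := by unfold Ag; infer_instance

def tripleEquiv : Fin 4 × Fin 4 × Fin 4 ≃ Y where
  toFun p := ![p.1, p.2.1, p.2.2]
  invFun y := (y 0, y 1, y 2)
  left_inv p := rfl
  right_inv y := by funext i; fin_cases i <;> rfl

lemma card_eq (K : ℕ) (g : Fin 4 → Y) :
    (Finset.univ.filter fun y : Y => K.testBit (enc fun s => decide (Ag y (g s))) = true).card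
      = cnt K (masks fun s => g s 0) (masks fun s => g s 1) (masks fun s => g s 2) := by
  rw [Finset.card_filter, ← Equiv.sum_comp tripleEquiv, Fintype.sum_prod_type]
  simp only [Fintype.sum_prod_type]
  have key : ∀ a b c : Fin 4, (if K.testBit (enc fun s => decide (Ag (tripleEquiv (a, b, c)) (g s)))
      = true then 1 else 0) = (K.testBit (enc (fun s => decide (a = g s 0)) |||
        enc (fun s => decide (b = g s 1)) ||| enc (fun s => decide (c = g s 2)))).toNat := by
    intro a b c
    rw [enc_or, enc_or]
    have : (fun s => decide (Ag (tripleEquiv (a, b, c)) (g s))) =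
        fun s => (decide (a = g s 0) || decide (b = g s 1)) || decide (c = g s 2) := by
      funext s
      rw [Bool.eq_iff_iff]
      simp only [Ag, Fin.exists_fin_succ, Bool.or_eq_true, decide_eq_true_eq, or_assoc]
      simp
      rfl
    rw [this]
    cases K.testBit _ <;> rfl
  simp only [key]
  simp only [Fin.sum_univ_four, cnt, masks, List.map_cons, List.map_nil, List.sum_cons,
    List.sum_nil, add_zero, add_assoc]

lemma K3_spec (w : Fin 4 → Bool) : K3.testBit (enc w) = true ↔
    3 ≤ (Finset.univ.filter fun s => w s = true).card := by
  revert w; decide +kernel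

lemma K2_spec (w : Fin 4 → Bool) : K2.testBit (enc w) = true ↔
    ((w 0 = true ∧ w 1 = true) ∨ (w 0 = true ∧ w 2 = true) ∨ (w 1 = true ∧ w 2 = true)) := by
  revert w; decide +kernel

def H (g : Fin 4 → Y) : Finset Y :=
  Finset.univ.filter fun y => 3 ≤ (Finset.univ.filter fun s => Ag y (g s)).card

lemma H_card (g : Fin 4 → Y) : (H g).card =
    cnt K3 (masks fun s => g s 0) (masks fun s => g s 1) (masks fun s => g s 2) := by
  rw [← card_eq]
  simp only [K3_spec, decide_eq_true_eq, H]

/-- coordinate `j` has a 3-majority value -/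
def Maj (g : Fin 4 → Y) (j : Fin 3) (v : Fin 4) : Prop :=
  3 ≤ (Finset.univ.filter fun s => v = g s j).card

lemma maj_iff (g : Fin 4 → Y) (j : Fin 3) :
    majL (masks fun s => g s j) = true ↔ ∃ v, Maj g j v := by
  simp [majL, masks, K3_spec, Maj, Fin.exists_fin_succ]

lemma Maj.mem {g : Fin 4 → Y} {j : Fin 3} {v : Fin 4} (h : Maj g j v) {y : Y} (hy : y j = v) :
    y ∈ H g := by
  simp only [H, Finset.mem_filter, Finset.mem_univ, true_and]
  refine le_trans h (Finset.card_le_card ?_)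
  intro s hs
  simp only [Finset.mem_filter, Finset.mem_univ, true_and] at hs ⊢
  exact ⟨j, hy.trans hs⟩

lemma row (g : Fin 4 → Y) : (H g).card ≤ 38 ∧ (35 ≤ (H g).card → ∀ j, ∃ v, Maj g j v) ∧
    (34 ≤ (H g).card → ∃ k, ∀ j, j ≠ k → ∃ v, Maj g j v) := by
  obtain ⟨L0, hL0, h0⟩ := exists_canon fun s => g s 0
  obtain ⟨L1, hL1, h1⟩ := exists_canon fun s => g s 1
  obtain ⟨L2, hL2, h2⟩ := exists_canon fun s => g s 2
  have hc := H_card g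
  rw [cnt_perm K3 h0 h1 h2] at hc
  have ck := check3
  simp only [List.all_eq_true] at ck
  have := ck L0 hL0 L1 hL1 L2 hL2
  rw [← hc, ← majL_perm h0, ← majL_perm h1, ← majL_perm h2] at this
  have m0 := maj_iff g 0
  have m1 := maj_iff g 1
  have m2 := maj_iff g 2
  simp only [Bool.and_eq_true, Bool.or_eq_true, Nat.ble_eq, Nat.beq_eq] at this
  obtain ⟨⟨a, b⟩, c⟩ := this
  refine ⟨a, fun h => ?_, fun h => ?_⟩
  · have b := b.resolve_left (by omega)
    simp only [Fin.forall_fin_succ, Fin.forall_fin_zero, Fin.isValue]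
    revert b m0 m1 m2
    cases majL (masks fun s => g s 0) <;> cases majL (masks fun s => g s 1) <;>
      cases majL (masks fun s => g s 2) <;> simp <;> tauto
  · have c := c.resolve_left (by omega)
    have d : (∃ v, Maj g 1 v) ∧ (∃ v, Maj g 2 v) ∨ (∃ v, Maj g 0 v) ∧ (∃ v, Maj g 2 v) ∨
        (∃ v, Maj g 0 v) ∧ (∃ v, Maj g 1 v) := by
      rw [← m0, ← m1, ← m2]
      revert c
      cases majL (masks fun s => g s 0) <;> cases majL (masks fun s => g s 1) <;>
      cases majL (masks fun s => g s 2) <;> simp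
    rcases d with ⟨p, q⟩ | ⟨p, q⟩ | ⟨p, q⟩
    · refine ⟨0, fun j hj => ?_⟩
      fin_cases j
      · simp at hj
      · exact p
      · exact q
    · refine ⟨1, fun j hj => ?_⟩
      fin_cases j
      · exact p
      · simp at hj
      · exact q
    · refine ⟨2, fun j hj => ?_⟩
      fin_cases j
      · exact p
      · exact q
      · simp at hj

lemma two_of_three (m1 m2 m3 : Y) : (Finset.univ.filter fun y : Y =>
    (Ag y m1 ∧ Ag y m2) ∨ (Ag y m1 ∧ Ag y m3) ∨ (Ag y m2 ∧ Ag y m3)).card ≤ 44 := by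
  have h := card_eq K2 ![m1, m2, m3, m3]
  obtain ⟨L0, hL0, h0⟩ := exists_canon fun s => ![m1, m2, m3, m3] s 0
  obtain ⟨L1, hL1, h1⟩ := exists_canon fun s => ![m1, m2, m3, m3] s 1
  obtain ⟨L2, hL2, h2⟩ := exists_canon fun s => ![m1, m2, m3, m3] s 2
  rw [cnt_perm K2 h0 h1 h2] at h
  have ck := check2
  simp only [List.all_eq_true] at ck
  have := ck L0 hL0 L1 hL1 L2 hL2
  rw [← h, Nat.ble_eq] at this
  simp only [K2_spec, decide_eq_true_eq] at this
  exact this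

lemma ag_card (m : Y) : (Finset.univ.filter fun y : Y => Ag y m).card = 37 := by
  revert m; unfold Ag; decide +kernel

/-- A row with large `H`: `H` is the agreement set of a point, up to one extra element. -/
lemma good (g : Fin 4 → Y) (h : 35 ≤ (H g).card) : ∃ m : Y, (∀ y, Ag y m → y ∈ H g) ∧
    ((H g).filter fun y => ¬ Ag y m).card ≤ 1 := by
  obtain ⟨h38, hm, -⟩ := row g
  choose m hm using hm h
  have sub : ∀ y, Ag y m → y ∈ H g := fun y ⟨j, hj⟩ => (hm j).mem hj
  refine ⟨m, sub, ?_⟩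
  have e := Finset.card_filter_add_card_filter_not (s := H g) (fun y => Ag y m)
  have : (H g).filter (fun y => Ag y m) = Finset.univ.filter fun y => Ag y m := by
    ext y; simpa using sub y
  rw [this, ag_card] at e
  omega

end HatK33

namespace HatK33

lemma miss_one {p : Fin 4 → Prop} [DecidablePred p]
    (h : 3 ≤ (Finset.univ.filter p).card) {r r' : Fin 4} (hr : r ≠ r') : p r ∨ p r' := by
  by_contra hc
  push Not at hc
  have e := Finset.card_filter_add_card_filter_not (s := (Finset.univ : Finset (Fin 4))) p
  have : 1 < (Finset.univ.filter fun x => ¬ p x).card :=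
    Finset.one_lt_card.2 ⟨r, by simpa using hc.1, r', by simpa using hc.2, hr⟩
  simp at e
  omega

def W (G : Fin 4 → Fin 4 → Y) : Finset Y :=
  Finset.univ.filter fun y => 3 ≤ (Finset.univ.filter fun r => y ∈ H (G r)).card

lemma prop3 {p1 p2 p3 q1 q2 q3 : Prop} (h1 : p1 ∨ p2) (h2 : p1 ∨ p3) (h3 : p2 ∨ p3) :
    ((((q1 ∧ q2) ∨ (q1 ∧ q3) ∨ (q2 ∧ q3)) ∨ (p1 ∧ ¬ q1)) ∨ (p2 ∧ ¬ q2)) ∨ (p3 ∧ ¬ q3) := by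
  tauto

lemma three_good (G : Fin 4 → Fin 4 → Y) {a b c : Fin 4} (hab : a ≠ b) (hac : a ≠ c) (hbc : b ≠ c)
    (ha : 35 ≤ (H (G a)).card) (hb : 35 ≤ (H (G b)).card) (hc : 35 ≤ (H (G c)).card) :
    (W G).card ≤ 47 := by
  obtain ⟨m1, -, e1⟩ := good _ ha
  obtain ⟨m2, -, e2⟩ := good _ hb
  obtain ⟨m3, -, e3⟩ := good _ hc
  have t := two_of_three m1 m2 m3
  have sub : W G ⊆ (((Finset.univ.filter fun y : Y =>
      (Ag y m1 ∧ Ag y m2) ∨ (Ag y m1 ∧ Ag y m3) ∨ (Ag y m2 ∧ Ag y m3)) ∪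
      ((H (G a)).filter fun y => ¬ Ag y m1)) ∪ ((H (G b)).filter fun y => ¬ Ag y m2)) ∪
      ((H (G c)).filter fun y => ¬ Ag y m3) := by
    intro y hy
    simp only [W, Finset.mem_filter, Finset.mem_univ, true_and] at hy
    have h1 := miss_one hy hab
    have h2 := miss_one hy hac
    have h3 := miss_one hy hbc
    simp only [Finset.mem_union, Finset.mem_filter, Finset.mem_univ, true_and]
    exact prop3 h1 h2 h3
  have := Finset.card_le_card sub
  have u1 := Finset.card_union_le (((Finset.univ.filter fun y : Y =>
      (Ag y m1 ∧ Ag y m2) ∨ (Ag y m1 ∧ Ag y m3) ∨ (Ag y m2 ∧ Ag y m3)) ∪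
      ((H (G a)).filter fun y => ¬ Ag y m1)) ∪ ((H (G b)).filter fun y => ¬ Ag y m2))
      ((H (G c)).filter fun y => ¬ Ag y m3)
  have u2 := Finset.card_union_le ((Finset.univ.filter fun y : Y =>
      (Ag y m1 ∧ Ag y m2) ∨ (Ag y m1 ∧ Ag y m3) ∨ (Ag y m2 ∧ Ag y m3)) ∪
      ((H (G a)).filter fun y => ¬ Ag y m1)) ((H (G b)).filter fun y => ¬ Ag y m2)
  have u3 := Finset.card_union_le (Finset.univ.filter fun y : Y =>
      (Ag y m1 ∧ Ag y m2) ∨ (Ag y m1 ∧ Ag y m3) ∨ (Ag y m2 ∧ Ag y m3))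
      ((H (G a)).filter fun y => ¬ Ag y m1)
  omega

lemma tight (g1 g2 g3 g4 : Fin 4 → Y) (h1 : 35 ≤ (H g1).card) (h2 : 35 ≤ (H g2).card)
    (h3 : 34 ≤ (H g3).card) (h4 : 34 ≤ (H g4).card)
    (T1 : ∀ y, y ∈ H g3 → y ∈ H g1 ∨ y ∈ H g2)
    (T2 : ∀ y, y ∈ H g1 → y ∈ H g2 → y ∈ H g3 → y ∈ H g4 → False) : False := by
  obtain ⟨m1, s1, e1⟩ := good _ h1
  obtain ⟨m2, s2, e2⟩ := good _ h2
  obtain ⟨k3, M3⟩ := (row g3).2.2 h3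
  obtain ⟨k4, M4⟩ := (row g4).2.2 h4
  have idx : ∀ k3 k4 : Fin 3, ∃ i k l : Fin 3, i ≠ k3 ∧ l ≠ k4 ∧ i ≠ k ∧ i ≠ l ∧ k ≠ l ∧
      ∀ j, j = i ∨ j = k ∨ j = l := by decide
  obtain ⟨i, k, l, hi3, hl4, hik, hil, hkl, hall⟩ := idx k3 k4
  obtain ⟨a, ha⟩ := M3 i hi3
  obtain ⟨b, hb⟩ := M4 l hl4
  have avoid : ∀ p q : Fin 4, ∃ u u' : Fin 4, u ≠ u' ∧ u ≠ p ∧ u ≠ q ∧ u' ≠ p ∧ u' ≠ q := by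
    decide
  let z : Fin 4 → Fin 4 → Y := fun u v j => if j = i then a else if j = k then u else v
  have zi : ∀ u v, z u v i = a := fun u v => by simp [z]
  have zk : ∀ u v, z u v k = u := fun u v => by simp [z, hik.symm]
  have zl : ∀ u v, z u v l = v := fun u v => by simp [z, hil.symm, hkl.symm]
  have hain : a = m1 i ∨ a = m2 i := by
    by_contra hc
    push Not at hc
    obtain ⟨u, u', huu, up, uq, up', uq'⟩ := avoid (m1 k) (m2 k)
    obtain ⟨v, v', hvv, vp, vq, vp', vq'⟩ := avoid (m1 l) (m2 l)
    have nag : ∀ (m : Y) (u v : Fin 4), a ≠ m i → u ≠ m k → v ≠ m l → ¬ Ag (z u v) m := by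
      rintro m u v p q r ⟨j, hj⟩
      rcases hall j with rfl | rfl | rfl
      · rw [zi] at hj; exact p hj
      · rw [zk] at hj; exact q hj
      · rw [zl] at hj; exact r hj
    have mem : ∀ u v, u ≠ m1 k → u ≠ m2 k → v ≠ m1 l → v ≠ m2 l →
        z u v ∈ (H g1).filter (fun y => ¬ Ag y m1) ∨ z u v ∈ (H g2).filter (fun y => ¬ Ag y m2) := by
      intro u v q q' r r'
      simp only [Finset.mem_filter]
      rcases T1 _ (ha.mem (zi u v)) with h | h
      · exact Or.inl ⟨h, nag _ _ _ hc.1 q r⟩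
      · exact Or.inr ⟨h, nag _ _ _ hc.2 q' r'⟩
    have n1 : z u v ≠ z u' v := fun h => huu (by rw [← zk u v, h, zk])
    have n2 : z u v ≠ z u v' := fun h => hvv (by rw [← zl u v, h, zl])
    have n3 : z u' v ≠ z u v' := fun h => hvv (by rw [← zl u' v, h, zl])
    rw [Finset.card_le_one] at e1 e2
    rcases mem u v up uq vp vq with x | x <;> rcases mem u' v up' uq' vp vq with y | y <;>
      rcases mem u v' up uq vp' vq' with w | w <;>
      first
        | exact n1 (e1 _ x _ y)
        | exact n1 (e2 _ x _ y)
        | exact n2 (e1 _ x _ w)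
        | exact n2 (e2 _ x _ w)
        | exact n3 (e1 _ y _ w)
        | exact n3 (e2 _ y _ w)
  rcases hain with h | h
  · exact T2 (z (m2 k) b) (s1 _ ⟨i, (zi _ _).trans h⟩) (s2 _ ⟨k, zk _ _⟩) (ha.mem (zi _ _))
      (hb.mem (zl _ _))
  · exact T2 (z (m1 k) b) (s1 _ ⟨k, zk _ _⟩) (s2 _ ⟨i, (zi _ _).trans h⟩) (ha.mem (zi _ _))
      (hb.mem (zl _ _))

lemma double_count (G : Fin 4 → Fin 4 → Y) : ∑ r, (H (G r)).card =
    ∑ y : Y, (Finset.univ.filter fun r => y ∈ H (G r)).card := by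
  simp only [Finset.card_filter]
  rw [Finset.sum_comm]
  refine Finset.sum_congr rfl fun r _ => ?_
  rw [← Finset.card_filter, Finset.filter_univ_mem]

lemma plane (G : Fin 4 → Fin 4 → Y) : (W G).card ≤ 47 := by
  by_contra hW
  push Not at hW
  set A := Finset.univ.filter fun r => 35 ≤ (H (G r)).card with hA
  have hA2 : A.card ≤ 2 := by
    by_contra h
    push Not at h
    obtain ⟨a, b, c, ha, hb, hc, hab, hac, hbc⟩ := Finset.two_lt_card_iff.1 h
    simp only [hA, Finset.mem_filter, Finset.mem_univ, true_and] at ha hb hc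
    have := three_good G hab hac hbc ha hb hc
    omega
  have hub : ∀ r, (H (G r)).card ≤ 34 + (if 35 ≤ (H (G r)).card then 4 else 0) := by
    intro r
    have := (row (G r)).1
    split_ifs <;> omega
  have hsum : ∑ r : Fin 4, (34 + (if 35 ≤ (H (G r)).card then 4 else 0)) = 136 + 4 * A.card := by
    rw [Finset.sum_add_distrib, ← Finset.sum_filter, ← hA]
    simp [mul_comm]
  have hlb : ∀ y : Y, (if 3 ≤ (Finset.univ.filter fun r => y ∈ H (G r)).card then 3 else 0) ≤
      (Finset.univ.filter fun r => y ∈ H (G r)).card := by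
    intro y; split_ifs <;> omega
  have hsumW : ∑ y : Y, (if 3 ≤ (Finset.univ.filter fun r => y ∈ H (G r)).card then 3 else 0) =
      3 * (W G).card := by
    rw [← Finset.sum_filter]
    simp [W, mul_comm]
  have s1 := Finset.sum_le_sum fun r (_ : r ∈ Finset.univ) => hub r
  have s2 := Finset.sum_le_sum fun y (_ : y ∈ Finset.univ) => hlb y
  have dc := double_count G
  have hub' := (Finset.sum_eq_sum_iff_of_le fun r (_ : r ∈ Finset.univ) => hub r).1 (by omega)
  have hlb' := (Finset.sum_eq_sum_iff_of_le fun y (_ : y ∈ Finset.univ) => hlb y).1 (by omega)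
  have cA : A.card = 2 := by omega
  have cA' : Aᶜ.card = 2 := by rw [Finset.card_compl, cA]; rfl
  obtain ⟨r1, r2, h12, hA12⟩ := Finset.card_eq_two.1 cA
  obtain ⟨r3, r4, h34, hA34⟩ := Finset.card_eq_two.1 cA'
  have m1 : r1 ∈ A := by simp [hA12]
  have m2 : r2 ∈ A := by simp [hA12]
  have cov : ∀ r, r = r1 ∨ r = r2 ∨ r = r3 ∨ r = r4 := by
    intro r
    by_cases h : r ∈ A
    · rw [hA12, Finset.mem_insert, Finset.mem_singleton] at h
      rcases h with h | h
      · exact Or.inl h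
      · exact Or.inr (Or.inl h)
    · rw [← Finset.mem_compl, hA34, Finset.mem_insert, Finset.mem_singleton] at h
      exact Or.inr (Or.inr h)
  simp only [hA, Finset.mem_filter, Finset.mem_univ, true_and] at m1 m2
  have hge : ∀ r, 34 ≤ (H (G r)).card := by
    intro r
    have := hub' r (Finset.mem_univ r)
    omega
  refine tight (G r1) (G r2) (G r3) (G r4) m1 m2 (hge _) (hge _) ?_ ?_
  · intro y hy
    have hn := hlb' y (Finset.mem_univ y)
    have pos : 0 < (Finset.univ.filter fun r => y ∈ H (G r)).card :=
      Finset.card_pos.2 ⟨r3, by simpa using hy⟩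
    have h3 : 3 ≤ (Finset.univ.filter fun r => y ∈ H (G r)).card := by
      split_ifs at hn <;> omega
    exact miss_one h3 h12
  · intro y y1 y2 y3 y4
    have hn := hlb' y (Finset.mem_univ y)
    have : (Finset.univ.filter fun r => y ∈ H (G r)) = Finset.univ := by
      ext r
      simp only [Finset.mem_filter, Finset.mem_univ, true_and, iff_true]
      rcases cov r with rfl | rfl | rfl | rfl <;> assumption
    rw [this] at hn
    simp at hn

lemma no_strategy (F G : Y → Y) (h : ∀ x y, Ag x (F y) ∨ Ag y (G x)) : False := by
  have sub : ∀ c : Fin 4, (Finset.univ.filter fun y => F y 2 ≠ c) ⊆ W fun r s => G ![r, s, c] := by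
    intro c y hy
    simp only [Finset.mem_filter, Finset.mem_univ, true_and] at hy
    simp only [W, Finset.mem_filter, Finset.mem_univ, true_and]
    have c3 : ∀ v : Fin 4, (Finset.univ.erase v).card = 3 := by decide
    refine (c3 (F y 0)).symm.le.trans (Finset.card_le_card fun r hr => ?_)
    simp only [Finset.mem_erase, Finset.mem_univ, and_true] at hr
    simp only [H, Finset.mem_filter, Finset.mem_univ, true_and]
    refine (c3 (F y 1)).symm.le.trans (Finset.card_le_card fun s hs => ?_)
    simp only [Finset.mem_erase, Finset.mem_univ, and_true] at hs
    simp only [Finset.mem_filter, Finset.mem_univ, true_and]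
    refine (h ![r, s, c] y).resolve_left ?_
    rintro ⟨j, hj⟩
    fin_cases j
    · exact hr hj
    · exact hs hj
    · exact hy hj.symm
  have b : ∀ c : Fin 4, (Finset.univ.filter fun y => F y 2 ≠ c).card ≤ 47 := fun c =>
    (Finset.card_le_card (sub c)).trans (plane _)
  have e : ∀ c : Fin 4, 17 ≤ (Finset.univ.filter fun y => F y 2 = c).card := by
    intro c
    have e := Finset.card_filter_add_card_filter_not (s := (Finset.univ : Finset Y))
      (fun y => F y 2 = c)
    have := b c
    have c64 : (Finset.univ : Finset Y).card = 64 := by simp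
    simp only [ne_eq] at this
    omega
  have t := Finset.card_eq_sum_card_fiberwise (s := (Finset.univ : Finset Y))
    (t := (Finset.univ : Finset (Fin 4))) (f := fun y => F y 2) (fun _ _ => by simp)
  have := Finset.sum_le_sum fun c (_ : c ∈ (Finset.univ : Finset (Fin 4))) => e c
  have c64 : (Finset.univ : Finset Y).card = 64 := by simp
  rw [← t, c64] at this
  simp at this

lemma upper {q : ℕ} (hq : 4 ≤ q)
    (h : HatGuessingWins (completeBipartiteGraph (Fin 3) (Fin 3)) q) : False := by
  obtain ⟨f, hf⟩ := h
  let em : Fin 4 → Fin q := Fin.castLE hq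
  let back : Fin q → Fin 4 := fun c => if h : c.1 < 4 then ⟨c.1, h⟩ else 0
  have hback : ∀ v, back (em v) = v := by
    intro v
    simp [back, em]
  let F : Y → Y := fun y i => back (f (Sum.inl i) fun u =>
    Sum.elim (fun _ => em 0) (fun j => em (y j)) u.1)
  let G : Y → Y := fun x i => back (f (Sum.inr i) fun u =>
    Sum.elim (fun j => em (x j)) (fun _ => em 0) u.1)
  refine no_strategy F G fun x y => ?_
  obtain ⟨v, hv⟩ := hf (Sum.elim (fun j => em (x j)) (fun j => em (y j)))
  rcases v with i | i
  · left
    refine ⟨i, ?_⟩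
    have : F y i = back (em (x i)) := by
      simp only [F]
      rw [← show _ = em (x i) from hv]
      congr 2
      funext ⟨u, hu⟩
      rcases u with u | u
      · simp at hu
      · rfl
    rw [this, hback]
  · right
    refine ⟨i, ?_⟩
    have : G x i = back (em (y i)) := by
      simp only [G]
      rw [← show _ = em (y i) from hv]
      congr 2
      funext ⟨u, hu⟩
      rcases u with u | u
      · rfl
      · simp at hu
    rw [this, hback]

end HatK33

namespace HatK33

def A0 : Fin 3 → Fin 3 → Fin 3 := ![![2, 0, 2], ![0, 1, 1], ![2, 1, 0]]
def A1 : Fin 3 → Fin 3 → Fin 3 := ![![1, 0, 0], ![2, 1, 2], ![2, 0, 1]]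
def B0 : Fin 3 → Fin 3 → Fin 3 := ![![1, 2, 0], ![2, 0, 0], ![1, 1, 2]]
def B1 : Fin 3 → Fin 3 → Fin 3 := ![![0, 2, 1], ![0, 0, 2], ![2, 1, 1]]

lemma strat : ∀ x0 x1 y0 y1 : Fin 3,
    A0 y0 y1 = x0 ∨ A1 y0 y1 = x1 ∨ B0 x0 x1 = y0 ∨ B1 x0 x1 = y1 := by
  decide +kernel

lemma lower : HatGuessingWins (completeBipartiteGraph (Fin 3) (Fin 3)) 3 := by
  refine ⟨fun v => match v with
    | Sum.inl i => fun n =>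
        if i = 0 then A0 (n ⟨Sum.inr 0, by simp⟩) (n ⟨Sum.inr 1, by simp⟩)
        else A1 (n ⟨Sum.inr 0, by simp⟩) (n ⟨Sum.inr 1, by simp⟩)
    | Sum.inr i => fun n =>
        if i = 0 then B0 (n ⟨Sum.inl 0, by simp⟩) (n ⟨Sum.inl 1, by simp⟩)
        else B1 (n ⟨Sum.inl 0, by simp⟩) (n ⟨Sum.inl 1, by simp⟩), fun c => ?_⟩
  rcases strat (c (Sum.inl 0)) (c (Sum.inl 1)) (c (Sum.inr 0)) (c (Sum.inr 1)) with h | h | h | h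
  · exact ⟨Sum.inl 0, h⟩
  · exact ⟨Sum.inl 1, h⟩
  · exact ⟨Sum.inr 0, h⟩
  · exact ⟨Sum.inr 1, h⟩

end HatK33

/-- The hat-guessing number of the complete bipartite graph `K_{3,3}` equals `3`. -/
theorem hat_guessing_K33 :
    IsGreatest {q : ℕ | HatGuessingWins (completeBipartiteGraph (Fin 3) (Fin 3)) q} 3 := by
  refine ⟨HatK33.lower, fun q hq => ?_⟩
  by_contra h
  exact HatK33.upper (by omega) hq
end

section
/- If four 3 × 3 × 3 combinatorial cubes in (Fin 4)³ have a two-intersection of at most 29 points, then their two-intersection is either a 3 × 3 × 3 combinatorial cube or a 3 × 3 × 3 combinatorial cube with one point removed. -/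
/-- A point of the `4 × 4 × 4` grid. -/
abbrev GridPt : Type := Fin 4 × Fin 4 × Fin 4

/-- A `3 × 3 × 3` combinatorial cube in `(Fin 4)³`: a product `A ×ˢ B ×ˢ C` with
`|A| = |B| = |C| = 3`. -/
def IsCube (D : Finset GridPt) : Prop :=
  ∃ A B C : Finset (Fin 4), A.card = 3 ∧ B.card = 3 ∧ C.card = 3 ∧ D = A ×ˢ B ×ˢ C

/-- A `2 × 3 × 3` combinatorial prism in `(Fin 4)³`: a product `A ×ˢ B ×ˢ C` whose side
sizes are `2, 3, 3` in some order. -/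
def IsPrism233 (D : Finset GridPt) : Prop :=
  ∃ A B C : Finset (Fin 4),
    ({A.card, B.card, C.card} : Multiset ℕ) = ({2, 3, 3} : Multiset ℕ) ∧ D = A ×ˢ B ×ˢ C

/-- The two-intersection of a family of sets: all points lying in at least two sets of
the family (counted with indices). -/
def twoInter {α : Type*} [Fintype α] [DecidableEq α] {n : ℕ} (S : Fin n → Finset α) :
    Finset α :=
  Finset.univ.filter (fun p => ∃ i j : Fin n, i ≠ j ∧ p ∈ S i ∧ p ∈ S j)

namespace FourCubes

/-- bit mask of the indices `i` with `a i = x` -/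
def mask (a : Fin 4 → Fin 4) (x : Fin 4) : ℕ :=
  (cond (a 0 == x) 1 0) ||| (cond (a 1 == x) 2 0) ||| (cond (a 2 == x) 4 0) |||
    (cond (a 3 == x) 8 0)

/-- `6015` is the table of the masks below 16 with at most two bits set. -/
def tab (m : ℕ) : ℕ := (6015 >>> m) &&& 1

def cntM (A B C : Fin 4 → ℕ) : ℕ := ∑ x, ∑ y, ∑ z, tab (A x ||| B y ||| C z)

/-- The same count on masks given as lists, in a form that evaluates quickly. -/
def cntL (A B C : List ℕ) : ℕ :=
  A.foldr (fun x s => B.foldr (fun y s => C.foldr (fun z s => tab (x ||| y ||| z) + s) s) s) 0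

def isMaj (m : ℕ) : Bool := Nat.beq m 15 || Nat.beq m 14 || Nat.beq m 13 || Nat.beq m 11 || Nat.beq m 7

def canon : List (List ℕ) :=
  [[15,0,0,0],[14,1,0,0],[13,2,0,0],[11,4,0,0],[7,8,0,0],[3,12,0,0],[5,10,0,0],[9,6,0,0],
   [3,4,8,0],[5,2,8,0],[9,2,4,0],[6,1,8,0],[10,1,4,0],[12,1,2,0],[1,2,4,8]]

set_option maxRecDepth 100000 in
theorem check : (canon.all fun A => canon.all fun B => canon.all fun C =>
    !(Nat.ble (cntL A B C) 29) || (isMaj (A.headD 0) && isMaj (B.headD 0) && isMaj (C.headD 0))) = true := by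
  decide +kernel

set_option maxRecDepth 100000 in
theorem canonize : ∀ a0 a1 a2 a3 : Fin 4, ∃ σ ∈ (Finset.univ : Finset (Equiv.Perm (Fin 4))),
    [mask ![a0,a1,a2,a3] (σ 0), mask ![a0,a1,a2,a3] (σ 1), mask ![a0,a1,a2,a3] (σ 2),
      mask ![a0,a1,a2,a3] (σ 3)] ∈ canon := by
  decide +kernel

theorem maj_spec0 : ∀ a0 a1 a2 a3 x : Fin 4, isMaj (mask ![a0,a1,a2,a3] x) = true →
    ∃ i : Fin 4, ∀ n, n ≠ i → ![a0,a1,a2,a3] n = x := by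
  decide +kernel

theorem eta4 (a : Fin 4 → Fin 4) : ![a 0, a 1, a 2, a 3] = a := by
  funext i; fin_cases i <;> rfl

theorem maj_spec (a : Fin 4 → Fin 4) (x : Fin 4) (h : isMaj (mask a x) = true) :
    ∃ i : Fin 4, ∀ n, n ≠ i → a n = x := by
  have := maj_spec0 (a 0) (a 1) (a 2) (a 3) x
  rw [eta4] at this
  exact this h

theorem canonizeFun (a : Fin 4 → Fin 4) : ∃ σ : Equiv.Perm (Fin 4),
    [mask a (σ 0), mask a (σ 1), mask a (σ 2), mask a (σ 3)] ∈ canon := by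
  obtain ⟨σ, -, h⟩ := canonize (a 0) (a 1) (a 2) (a 3)
  rw [eta4] at h
  exact ⟨σ, h⟩

theorem cntL_eq (A B C : Fin 4 → ℕ) :
    cntL [A 0, A 1, A 2, A 3] [B 0, B 1, B 2, B 3] [C 0, C 1, C 2, C 3] = cntM A B C := by
  simp only [cntL, cntM, List.foldr, Fin.sum_univ_four]
  ring

theorem cntM_perm (A B C : Fin 4 → ℕ) (σ τ ρ : Equiv.Perm (Fin 4)) :
    cntM (fun x => A (σ x)) (fun x => B (τ x)) (fun x => C (ρ x)) = cntM A B C := by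
  unfold cntM
  rw [← Equiv.sum_comp σ (fun x => ∑ y, ∑ z, tab (A x ||| B y ||| C z))]
  refine Finset.sum_congr rfl fun x _ => ?_
  rw [← Equiv.sum_comp τ (fun y => ∑ z, tab (A (σ x) ||| B y ||| C z))]
  refine Finset.sum_congr rfl fun y _ => ?_
  rw [← Equiv.sum_comp ρ (fun z => tab (A (σ x) ||| B (τ y) ||| C z))]

theorem maj_of_cnt (a b c : Fin 4 → Fin 4) (h : cntM (mask a) (mask b) (mask c) ≤ 29) :
    ∃ x y z i j k : Fin 4, (∀ n, n ≠ i → a n = x) ∧ (∀ n, n ≠ j → b n = y) ∧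
      (∀ n, n ≠ k → c n = z) := by
  obtain ⟨σ, hσ⟩ := canonizeFun a
  obtain ⟨τ, hτ⟩ := canonizeFun b
  obtain ⟨ρ, hρ⟩ := canonizeFun c
  have key := check
  rw [List.all_eq_true] at key
  have key := key _ hσ
  rw [List.all_eq_true] at key
  have key := key _ hτ
  rw [List.all_eq_true] at key
  have key := key _ hρ
  rw [cntL_eq (fun x => mask a (σ x)) (fun x => mask b (τ x)) (fun x => mask c (ρ x)),
    cntM_perm, Nat.ble_eq_true_of_le h] at key
  simp only [Bool.not_true, Bool.false_or, Bool.and_eq_true] at key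
  obtain ⟨⟨h1, h2⟩, h3⟩ := key
  obtain ⟨i, hi⟩ := maj_spec a _ h1
  obtain ⟨j, hj⟩ := maj_spec b _ h2
  obtain ⟨k, hk⟩ := maj_spec c _ h3
  exact ⟨_, _, _, i, j, k, hi, hj, hk⟩

def bm (X : Fin 4 → Bool) : ℕ :=
  (cond (X 0) 1 0) ||| (cond (X 1) 2 0) ||| (cond (X 2) 4 0) ||| (cond (X 3) 8 0)

theorem bm_or (X Y : Fin 4 → Bool) : bm X ||| bm Y = bm (fun n => X n || Y n) := by
  simp only [bm]
  cases X 0 <;> cases X 1 <;> cases X 2 <;> cases X 3 <;>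
    cases Y 0 <;> cases Y 1 <;> cases Y 2 <;> cases Y 3 <;> rfl

theorem tab_bm0 : ∀ u0 u1 u2 u3 : Bool, tab (bm ![u0, u1, u2, u3]) =
    if (∃ i j : Fin 4, i ≠ j ∧ ![u0, u1, u2, u3] i = false ∧ ![u0, u1, u2, u3] j = false)
      then 1 else 0 := by
  decide +kernel

theorem tab_bm (U : Fin 4 → Bool) : tab (bm U) =
    if (∃ i j : Fin 4, i ≠ j ∧ U i = false ∧ U j = false) then 1 else 0 := by
  have e : ![U 0, U 1, U 2, U 3] = U := by funext i; fin_cases i <;> rfl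
  have := tab_bm0 (U 0) (U 1) (U 2) (U 3)
  rwa [e] at this

theorem card_eq (a b c : Fin 4 → Fin 4) (S : Finset GridPt)
    (hS : ∀ x y z, (x, y, z) ∈ S ↔ ∃ i j : Fin 4, i ≠ j ∧ (x ≠ a i ∧ y ≠ b i ∧ z ≠ c i) ∧
      (x ≠ a j ∧ y ≠ b j ∧ z ≠ c j)) :
    S.card = cntM (mask a) (mask b) (mask c) := by
  have e : S = Finset.univ.filter (fun p => p ∈ S) := by ext; simp
  rw [e, Finset.card_filter, Fintype.sum_prod_type]
  unfold cntM
  refine Finset.sum_congr rfl fun x _ => ?_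
  rw [Fintype.sum_prod_type]
  refine Finset.sum_congr rfl fun y _ => Finset.sum_congr rfl fun z _ => ?_
  have e1 : mask a x ||| mask b y ||| mask c z =
      bm (fun n => ((a n == x) || (b n == y)) || (c n == z)) := by
    rw [← bm_or (fun n => (a n == x) || (b n == y)) (fun n => c n == z),
      ← bm_or (fun n => a n == x) (fun n => b n == y)]
    rfl
  rw [e1, tab_bm]
  refine if_congr ?_ rfl rfl
  rw [hS]
  simp only [Bool.or_eq_false_iff, beq_eq_false_iff_ne, and_assoc, ne_comm]

set_option synthInstance.maxSize 2000 in
set_option synthInstance.maxHeartbeats 400000 in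
/-- Two of four indices avoiding the collisions, when each coordinate has a majority value. -/
theorem bool_fact : ∀ (i j k : Fin 4) (X Y Z U V W : Bool),
    (∃ m n : Fin 4, m ≠ n ∧
      ((cond (m == i) U X = false ∧ cond (m == j) V Y = false ∧ cond (m == k) W Z = false) ∧
      (cond (n == i) U X = false ∧ cond (n == j) V Y = false ∧ cond (n == k) W Z = false))) ↔
    ((X = false ∧ Y = false ∧ Z = false) ∧
      ¬ ((i ≠ j ∧ j ≠ k ∧ i ≠ k) ∧ U = true ∧ V = true ∧ W = true)) := by
  decide +kernel

theorem compl_single (A : Finset (Fin 4)) (h : A.card = 3) : ∃ x, ∀ y, y ∈ A ↔ y ≠ x := by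
  have h1 : (Aᶜ).card = 1 := by rw [Finset.card_compl, h]; rfl
  obtain ⟨x, hx⟩ := Finset.card_eq_one.1 h1
  refine ⟨x, fun y => ?_⟩
  have : y ∈ Aᶜ ↔ y = x := by rw [hx, Finset.mem_singleton]
  rw [Finset.mem_compl] at this
  tauto

theorem cube_spec (D : Finset GridPt) (h : IsCube D) :
    ∃ q : GridPt, ∀ x y z, (x, y, z) ∈ D ↔ x ≠ q.1 ∧ y ≠ q.2.1 ∧ z ≠ q.2.2 := by
  obtain ⟨A, B, C, hA, hB, hC, rfl⟩ := h
  obtain ⟨x, hx⟩ := compl_single A hA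
  obtain ⟨y, hy⟩ := compl_single B hB
  obtain ⟨z, hz⟩ := compl_single C hC
  refine ⟨(x, y, z), fun px py pz => ?_⟩
  simp only [Finset.mem_product, hx, hy, hz]

theorem cond_fact (a : Fin 4 → Fin 4) (i x p : Fin 4) (hi : ∀ n, n ≠ i → a n = x) (n : Fin 4) :
    p ≠ a n ↔ cond (n == i) (p == a i) (p == x) = false := by
  by_cases h : n = i
  · subst h; simp
  · simp [h, hi n h]

end FourCubes

open FourCubes in
/-- If four `3 × 3 × 3` cubes in `(Fin 4)³` two-intersect in at most 29 points, then
their two-intersection is a `3 × 3 × 3` cube or a `3 × 3 × 3` cube missing one point. -/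
theorem twoInter_four_cubes (C : Fin 4 → Finset GridPt) (hC : ∀ i, IsCube (C i))
    (h : (twoInter C).card ≤ 29) :
    IsCube (twoInter C) ∨
      ∃ (D : Finset GridPt) (p : GridPt), IsCube D ∧ p ∈ D ∧ twoInter C = D.erase p := by
  choose q hq using fun i => cube_spec (C i) (hC i)
  have hS : ∀ x y z, (x, y, z) ∈ twoInter C ↔ ∃ i j : Fin 4, i ≠ j ∧
      (x ≠ (q i).1 ∧ y ≠ (q i).2.1 ∧ z ≠ (q i).2.2) ∧
      (x ≠ (q j).1 ∧ y ≠ (q j).2.1 ∧ z ≠ (q j).2.2) := by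
    intro x y z
    simp only [twoInter, Finset.mem_filter, Finset.mem_univ, true_and, hq]
  have hcard := card_eq (fun i => (q i).1) (fun i => (q i).2.1) (fun i => (q i).2.2) _ hS
  rw [hcard] at h
  obtain ⟨x, y, z, i, j, k, hi, hj, hk⟩ := maj_of_cnt _ _ _ h
  have hS2 : ∀ px py pz, (px, py, pz) ∈ twoInter C ↔ (px ≠ x ∧ py ≠ y ∧ pz ≠ z) ∧
      ¬ ((i ≠ j ∧ j ≠ k ∧ i ≠ k) ∧ px = (q i).1 ∧ py = (q j).2.1 ∧ pz = (q k).2.2) := by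
    intro px py pz
    have := bool_fact i j k (px == x) (py == y) (pz == z) (px == (q i).1) (py == (q j).2.1)
      (pz == (q k).2.2)
    simp only [← cond_fact (fun i => (q i).1) i x px hi, ← cond_fact (fun i => (q i).2.1) j y py hj,
      ← cond_fact (fun i => (q i).2.2) k z pz hk] at this
    rw [hS, this]
    simp only [beq_eq_false_iff_ne, beq_iff_eq]
  have hD : IsCube (({x}ᶜ : Finset (Fin 4)) ×ˢ ({y}ᶜ : Finset (Fin 4)) ×ˢ
      ({z}ᶜ : Finset (Fin 4))) :=
    ⟨_, _, _, by simp [Finset.card_compl], by simp [Finset.card_compl],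
      by simp [Finset.card_compl], rfl⟩
  by_cases hc : (i ≠ j ∧ j ≠ k ∧ i ≠ k) ∧ (q i).1 ≠ x ∧ (q j).2.1 ≠ y ∧ (q k).2.2 ≠ z
  · right
    refine ⟨_, ((q i).1, (q j).2.1, (q k).2.2), hD, ?_, ?_⟩
    · simpa using hc.2
    · ext ⟨px, py, pz⟩
      rw [hS2]
      simp only [Finset.mem_erase, Finset.mem_product, Finset.mem_compl, Finset.mem_singleton,
        ne_eq, Prod.mk.injEq]
      tauto
  · left
    convert hD using 1
    ext ⟨px, py, pz⟩
    rw [hS2]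
    simp only [Finset.mem_product, Finset.mem_compl, Finset.mem_singleton]
    refine ⟨fun h => h.1, fun h => ⟨h, ?_⟩⟩
    rintro ⟨h1, rfl, rfl, rfl⟩
    exact hc ⟨h1, h⟩
end

section
/- Any four pairwise distinct 3 × 3 combinatorial squares in (Fin 4)² have a two-intersection of at least 12 points. -/
/-- A `3 × 3` combinatorial square in `(Fin 4)²`: a product `A ×ˢ B` with
`|A| = |B| = 3`. -/
def IsSquare33 (D : Finset (Fin 4 × Fin 4)) : Prop :=
  ∃ A B : Finset (Fin 4), A.card = 3 ∧ B.card = 3 ∧ D = A ×ˢ B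

/-- Membership of `p` in the square omitting row `c / 4` and column `c % 4`. -/
def hitSq (c : Fin 16) (p : Fin 4 × Fin 4) : Bool :=
  !(Nat.beq p.1.val (c.val / 4)) && !(Nat.beq p.2.val (c.val % 4))

/-- At least two of four booleans are true. -/
def twoOf (a b c d : Bool) : Bool :=
  (a && (b || c || d)) || (b && (c || d)) || (c && d)

set_option maxRecDepth 100000 in
theorem sorted_case : ∀ a b c d : Fin 16, a < b → b < c → c < d →
    12 ≤ (Finset.univ.filter (fun p : Fin 4 × Fin 4 =>
      twoOf (hitSq a p) (hitSq b p) (hitSq c p) (hitSq d p) = true)).card := by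
  decide +kernel

theorem card_three (A : Finset (Fin 4)) (h : A.card = 3) : ∃ a, ∀ x, x ∈ A ↔ x ≠ a := by
  have h1 : Aᶜ.card = 1 := by rw [Finset.card_compl, h]; rfl
  obtain ⟨a, ha⟩ := Finset.card_eq_one.mp h1
  refine ⟨a, fun x => ?_⟩
  have h2 : x ∈ Aᶜ ↔ x = a := by rw [ha, Finset.mem_singleton]
  rw [Finset.mem_compl] at h2
  tauto

theorem exists_code (D : Finset (Fin 4 × Fin 4)) (h : IsSquare33 D) :
    ∃ c : Fin 16, ∀ p, p ∈ D ↔ hitSq c p = true := by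
  obtain ⟨A, B, hA, hB, rfl⟩ := h
  obtain ⟨a, ha⟩ := card_three A hA
  obtain ⟨b, hb⟩ := card_three B hB
  refine ⟨⟨4 * a.val + b.val, by omega⟩, fun p => ?_⟩
  have e1 : (4 * a.val + b.val) / 4 = a.val := by omega
  have e2 : (4 * a.val + b.val) % 4 = b.val := by omega
  rw [Finset.mem_product, ha, hb]
  simp [hitSq, e1, e2, Fin.ext_iff, ← Bool.not_eq_true, Nat.beq_eq]

/-- Four pairwise distinct `3 × 3` combinatorial squares in `(Fin 4)²` two-intersect in
at least 12 points. -/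
theorem twoInter_four_squares (S : Fin 4 → Finset (Fin 4 × Fin 4))
    (hS : ∀ i, IsSquare33 (S i)) (hdist : ∀ i j, i ≠ j → S i ≠ S j) :
    12 ≤ (twoInter S).card := by
  choose e he using fun i => exists_code (S i) (hS i)
  have hinj : Function.Injective e := by
    intro i j hij
    by_contra hne
    exact hdist i j hne (by ext p; rw [he, he, hij])
  have hm : StrictMono (e ∘ Tuple.sort e) :=
    (Tuple.monotone_sort e).strictMono_of_injective (hinj.comp (Tuple.sort e).injective)
  generalize Tuple.sort e = σ at hm
  refine (sorted_case _ _ _ _ (hm (show (0 : Fin 4) < 1 by decide))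
    (hm (show (1 : Fin 4) < 2 by decide)) (hm (show (2 : Fin 4) < 3 by decide))).trans ?_
  apply Finset.card_le_card
  intro p hp
  simp only [Finset.mem_filter, Finset.mem_univ, true_and, Function.comp, twoOf,
    Bool.or_eq_true, Bool.and_eq_true, ← he] at hp
  simp only [twoInter, Finset.mem_filter, Finset.mem_univ, true_and]
  have key : ∀ i j : Fin 4, i ≠ j → p ∈ S (σ i) → p ∈ S (σ j) →
      ∃ i j : Fin 4, i ≠ j ∧ p ∈ S i ∧ p ∈ S j :=
    fun i j hij h1 h2 => ⟨σ i, σ j, fun h => hij (σ.injective h), h1, h2⟩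
  rcases hp with (⟨h, (k | k) | k⟩ | ⟨h, k | k⟩) | ⟨h, k⟩ <;>
    exact key _ _ (by decide) h k
end
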